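/- Let k, d_A, d_B ≥ 1, let P : Herm_{d_A} → Herm_{d_B} be a (PSD(C^{d_A}), PSD(C^{d_B}))-entanglement annihilating linear map, and let Q : Herm_{d_B} → Herm_{d_A} be a linear map factoring through the Lorentz cone L_k, i.e., Q = Σ_{i=1}^m S_i ∘ R_i where each R_i : Herm_{d_B} → R^{k+1} is (PSD(C^{d_B}), L_k)-positive and each S_i : R^{k+1} → Herm_{d_A} is (L_k, PSD(C^{d_A}))-positive. Then Q ∘ P : Herm_{d_A} → Herm_{d_A} is (PSD(C^{d_A}), PSD(C^{d_A}))-entanglement breaking. -/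

import Mathlib

open scoped TensorProduct ComplexOrder
open Set

noncomputable section

/-- The dual cone of a set `C`, inside the algebraic dual space. -/
def dualConeSet {V : Type*} [AddCommGroup V] [Module ℝ V] (C : Set V) :
    Set (Module.Dual ℝ V) := {φ | ∀ x ∈ C, 0 ≤ φ x}

/-- A proper cone: a closed convex cone which is generating (`C - C = V`) and
pointed (`C ∩ (-C) = {0}`). -/
def IsProperCone {V : Type*} [NormedAddCommGroup V] [NormedSpace ℝ V] (C : Set V) : Prop :=
  IsClosed C ∧ Convex ℝ C ∧ (∀ ⦃c : ℝ⦄, 0 < c → ∀ ⦃x⦄, x ∈ C → c • x ∈ C) ∧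
    (∀ v : V, ∃ x ∈ C, ∃ y ∈ C, v = x - y) ∧ C ∩ (-C) = {0}

/-- `(C₁,C₂)`-entanglement breaking maps. -/
def IsEntanglementBreaking {V₁ V₂ : Type*} [AddCommGroup V₁] [Module ℝ V₁]
    [AddCommGroup V₂] [Module ℝ V₂] (C₁ : Set V₁) (C₂ : Set V₂) (P : V₁ →ₗ[ℝ] V₂) : Prop :=
  ∃ (m : ℕ) (φ : Fin m → Module.Dual ℝ V₁) (x : Fin m → V₂),
    (∀ i, φ i ∈ dualConeSet C₁) ∧ (∀ i, x i ∈ C₂) ∧ ∀ v, P v = ∑ i, φ i v • x i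

/-- The `k`-fold minimal tensor power of a cone. -/
def minTensorPow {V : Type*} [AddCommGroup V] [Module ℝ V] (C : Set V) (k : ℕ) :
    Set (⨂[ℝ] _ : Fin k, V) :=
  convexHull ℝ {z | ∃ x : Fin k → V, (∀ i, x i ∈ C) ∧ z = PiTensorProduct.tprod ℝ x}

/-- The functional on the `k`-fold tensor power induced by a family of functionals,
`x₁ ⊗ ⋯ ⊗ x_k ↦ ∏ i, φ i (x i)`. -/
def dualPairing {V : Type*} [AddCommGroup V] [Module ℝ V] {k : ℕ}
    (φ : Fin k → Module.Dual ℝ V) : (⨂[ℝ] _ : Fin k, V) →ₗ[ℝ] ℝ :=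
  PiTensorProduct.lift ((MultilinearMap.mkPiAlgebra ℝ (Fin k) ℝ).compLinearMap φ)

/-- The `k`-fold maximal tensor power of a cone: the dual of the minimal tensor power of
the dual cone, under the canonical identification of `(V^{⊗k})*` with `(V*)^{⊗k}`. -/
def maxTensorPow {V : Type*} [AddCommGroup V] [Module ℝ V] (C : Set V) (k : ℕ) :
    Set (⨂[ℝ] _ : Fin k, V) :=
  {z | ∀ φ : Fin k → Module.Dual ℝ V, (∀ i, φ i ∈ dualConeSet C) → 0 ≤ dualPairing φ z}

/-- `(C₁,C₂)`-entanglement annihilating maps: `P^{⊗k}` maps the `k`-fold maximal tensor power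
of `C₁` into the `k`-fold minimal tensor power of `C₂`, for every `k ≥ 1`. -/
def IsEntanglementAnnihilating {V₁ V₂ : Type*} [AddCommGroup V₁] [Module ℝ V₁]
    [AddCommGroup V₂] [Module ℝ V₂] (C₁ : Set V₁) (C₂ : Set V₂) (P : V₁ →ₗ[ℝ] V₂) : Prop :=
  ∀ k : ℕ, 1 ≤ k →
    Set.MapsTo (⇑(PiTensorProduct.map fun _ : Fin k => P))
      (maxTensorPow C₁ k) (minTensorPow C₂ k)

/-- A pair of cones is resilient if every entanglement annihilating map between them is
entanglement breaking. -/
def IsResilientPair {V₁ V₂ : Type*} [AddCommGroup V₁] [Module ℝ V₁]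
    [AddCommGroup V₂] [Module ℝ V₂] (C₁ : Set V₁) (C₂ : Set V₂) : Prop :=
  ∀ P : V₁ →ₗ[ℝ] V₂, IsEntanglementAnnihilating C₁ C₂ P → IsEntanglementBreaking C₁ C₂ P

/-- The minimal tensor product of two cones. -/
def minTensor {V W : Type*} [AddCommGroup V] [Module ℝ V] [AddCommGroup W] [Module ℝ W]
    (C : Set V) (D : Set W) : Set (V ⊗[ℝ] W) :=
  convexHull ℝ {z | ∃ x ∈ C, ∃ y ∈ D, z = x ⊗ₜ[ℝ] y}

/-- The maximal tensor product of two cones: the dual of the minimal tensor product of the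
dual cones, under the canonical identification of `(V ⊗ W)*` with `V* ⊗ W*`. -/
def maxTensor {V W : Type*} [AddCommGroup V] [Module ℝ V] [AddCommGroup W] [Module ℝ W]
    (C : Set V) (D : Set W) : Set (V ⊗[ℝ] W) :=
  {z | ∀ φ ∈ dualConeSet C, ∀ ψ ∈ dualConeSet D,
      0 ≤ TensorProduct.dualDistrib ℝ V W (φ ⊗ₜ[ℝ] ψ) z}

/-- The Lorentz cone `L_n ⊆ ℝ ⊕ ℝⁿ`. -/
def lorentzCone (n : ℕ) : Set (ℝ × EuclideanSpace ℝ (Fin n)) := {p | ‖p.2‖ ≤ p.1}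

abbrev HermMat (d : ℕ) := ↥(selfAdjoint (Matrix (Fin d) (Fin d) ℂ))

/-- The cone of positive semidefinite matrices inside the Hermitian matrices. -/
def psdCone (d : ℕ) : Set (HermMat d) :=
  {X | Matrix.PosSemidef (X : Matrix (Fin d) (Fin d) ℂ)}

/-!
By duality for the cone of entanglement breaking maps, a map `f = R ∘ P` into the Lorentz space is
entanglement breaking as soon as `tr (f ∘ T) ≥ 0` for every `T` which is positive from the Lorentz
cone to the bidual of `C₁`. Such a composite `g = f ∘ T` is an entanglement annihilating
endomorphism of the Lorentz cone, so it is enough to show that these have nonnegative trace.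

Averaging over local sign flips makes the space block of `g` diagonal, with entries `λ₁, …, λ_k`;
let `a` be its time entry. A multilinear form `ω` on `ℝᵏ` with `|ω x| ≤ ∏ ‖x l‖` gives an element
`e₀ ⊗ ⋯ ⊗ e₀ ± ∑ I, ω (e_I) e_I` of the maximal tensor power of the Lorentz cone and a form
`∏ (x l).1 ∓ ω` which is nonnegative on the minimal one. Pairing the image under `g^{⊗m}` of the
former with the latter yields `∑ I, ω (e_I)² ∏ λ_{I l} ≤ aᵐ`. The entries of one column of a product
of Clifford matrices provide `n` such forms, with `n` independent of `m`, whose squares sum to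
`∏ ‖x l‖²`. Hence `(∑ λ)ᵐ ≤ n aᵐ` for all `m ≥ 1`, which forces `|∑ λ| ≤ a`, that is
`tr g = a + ∑ λ ≥ 0`.
-/

theorem isCompact_convexHull {E : Type*} [NormedAddCommGroup E] [NormedSpace ℝ E]
    [FiniteDimensional ℝ E] {s : Set E} (hs : IsCompact s) : IsCompact (convexHull ℝ s) := by
  set n := Module.finrank ℝ E + 1
  let combine : (Fin n → ℝ) × (Fin n → E) → E := fun p => ∑ i, p.1 i • p.2 i
  suffices convexHull ℝ s = combine '' (stdSimplex ℝ (Fin n) ×ˢ Set.univ.pi fun _ => s) by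
    rw [this]
    exact ((isCompact_stdSimplex ℝ (Fin n)).prod (isCompact_univ_pi fun _ => hs)).image
      (by fun_prop)
  refine Subset.antisymm (fun x hx => ?_) ?_
  · obtain ⟨ι, _, z, w, hz, hind, hw, hw1, rfl⟩ := eq_pos_convex_span_of_mem_convexHull hx
    have : Nonempty ι := by
      by_contra hempty
      rw [not_nonempty_iff] at hempty
      simp at hw1
    have hcard : Fintype.card ι ≤ Fintype.card (Fin n) := by
      simpa [n] using hind.card_le_finrank_succ.trans (Nat.succ_le_succ (Submodule.finrank_le _))
    obtain ⟨j⟩ := Function.Embedding.nonempty_of_card_le hcard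
    have hsection (i : ι) : Function.invFun j (j i) = i := Function.leftInverse_invFun j.injective i
    have hoff {i : Fin n} (hi : i ∉ range j) : Function.extend j w 0 i = 0 :=
      Function.extend_apply' _ _ _ hi
    refine ⟨(Function.extend j w 0, z ∘ Function.invFun j),
      ⟨⟨fun i => ?_, ?_⟩, fun i _ => hz (mem_range_self _)⟩, ?_⟩
    · by_cases hi : i ∈ range j
      · obtain ⟨a, rfl⟩ := hi
        simpa only [j.injective.extend_apply] using (hw a).le
      · exact (hoff hi).ge
    · rw [← hw1]
      exact (Fintype.sum_of_injective j j.injective _ _ (fun _ => hoff)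
        fun i => (j.injective.extend_apply w 0 i).symm).symm
    · refine (Fintype.sum_of_injective j j.injective _ _ (fun i hi => ?_) fun i => ?_).symm
      · simp only [hoff hi, zero_smul]
      · simp only [j.injective.extend_apply, Function.comp_apply, hsection]
  · rintro _ ⟨⟨w, z⟩, ⟨⟨hw, hw1⟩, hz⟩, rfl⟩
    exact mem_convexHull_of_exists_fintype w z hw hw1 (fun i => hz i trivial) rfl

theorem mem_hull_of_forall_dual_nonneg {E : Type*} [NormedAddCommGroup E] [NormedSpace ℝ E]
    [FiniteDimensional ℝ E] {s : Set E} (hs : IsCompact s) (ℓ : E →L[ℝ] ℝ)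
    (hℓ : ∀ y ∈ s, ℓ y = 1) {x : E}
    (hx : ∀ g : E →L[ℝ] ℝ, (∀ y ∈ s, 0 ≤ g y) → 0 ≤ g x) : x ∈ PointedCone.hull ℝ s := by
  have hℓx : 0 ≤ ℓ x := hx ℓ fun y hy => by simp [hℓ y hy]
  rcases hℓx.eq_or_lt with h0 | hpos
  · have hnonneg (g : E →L[ℝ] ℝ) : 0 ≤ g x := by
      obtain ⟨M, hM⟩ := hs.exists_bound_of_continuousOn g.continuous.continuousOn
      have := hx (g + M • ℓ) fun y hy => by
        have := neg_abs_le (g y)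
        have := hM y hy
        simp only [Real.norm_eq_abs] at this
        simp [hℓ y hy]
        linarith
      simpa [← h0] using this
    have hx0 : x = 0 := SeparatingDual.eq_zero_of_forall_dual_eq_zero (R := ℝ) fun g =>
      le_antisymm (by simpa using hnonneg (-g)) (hnonneg g)
    simp [hx0]
  · suffices hmem : (ℓ x)⁻¹ • x ∈ convexHull ℝ s by
      have := (PointedCone.hull ℝ s).smul_mem hℓx
        (convexHull_min PointedCone.subset_hull (PointedCone.convex _) hmem)
      simpa [smul_smul, hpos.ne'] using this
    by_contra hnot
    obtain ⟨g, u, hgx, hgs⟩ := geometric_hahn_banach_point_closed (convex_convexHull ℝ s)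
      (isCompact_convexHull hs).isClosed hnot
    have hsep := hx (g - u • ℓ) fun y hy => by
      simpa [hℓ y hy] using (hgs y (subset_convexHull ℝ s hy)).le
    simp only [map_smul, smul_eq_mul, inv_mul_lt_iff₀ hpos] at hgx
    simp only [sub_apply, smul_apply, smul_eq_mul] at hsep
    linarith

section TensorPowers

variable {V₀ V₁ V₂ V₃ : Type*} [AddCommGroup V₀] [Module ℝ V₀] [AddCommGroup V₁] [Module ℝ V₁]
  [AddCommGroup V₂] [Module ℝ V₂] [AddCommGroup V₃] [Module ℝ V₃]
  {C₀ : Set V₀} {C₁ : Set V₁} {C₂ : Set V₂} {C₃ : Set V₃}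

theorem dualPairing_map {m : ℕ} (A : Fin m → V₀ →ₗ[ℝ] V₁) (φ : Fin m → Module.Dual ℝ V₁)
    (z : ⨂[ℝ] _ : Fin m, V₀) :
    dualPairing φ (PiTensorProduct.map A z) = dualPairing (fun l => φ l ∘ₗ A l) z :=
  DFunLike.congr_fun (PiTensorProduct.lift_comp_map A
    ((MultilinearMap.mkPiAlgebra ℝ (Fin m) ℝ).compLinearMap φ)) z

theorem mapsTo_maxTensorPow {m : ℕ} {A : Fin m → V₀ →ₗ[ℝ] V₁}
    (hA : ∀ l, ∀ φ ∈ dualConeSet C₁, φ ∘ₗ A l ∈ dualConeSet C₀) :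
    MapsTo (PiTensorProduct.map A) (maxTensorPow C₀ m) (maxTensorPow C₁ m) := fun z hz φ hφ =>
  (dualPairing_map A φ z).symm ▸ hz _ fun l => hA l _ (hφ l)

theorem convex_minTensorPow (C : Set V₀) (m : ℕ) : Convex ℝ (minTensorPow C m) :=
  convex_convexHull ℝ _

theorem mapsTo_minTensorPow {m : ℕ} {B : Fin m → V₂ →ₗ[ℝ] V₃} (hB : ∀ l, MapsTo (B l) C₂ C₃) :
    MapsTo (PiTensorProduct.map B) (minTensorPow C₂ m) (minTensorPow C₃ m) := by
  refine convexHull_min ?_ ((convex_minTensorPow C₃ m).linear_preimage (PiTensorProduct.map B))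
  rintro _ ⟨x, hx, rfl⟩
  exact subset_convexHull ℝ _ ⟨_, fun l => hB l (hx l), PiTensorProduct.map_tprod B x⟩

theorem lift_nonneg_of_mem_minTensorPow {m : ℕ} {Φ : MultilinearMap ℝ (fun _ : Fin m => V₀) ℝ}
    (hΦ : ∀ x, (∀ l, x l ∈ C₀) → 0 ≤ Φ x) {z : ⨂[ℝ] _ : Fin m, V₀} (hz : z ∈ minTensorPow C₀ m) :
    0 ≤ PiTensorProduct.lift Φ z := by
  refine convexHull_min ?_ (convex_halfSpace_ge (PiTensorProduct.lift Φ).isLinear 0) hz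
  rintro _ ⟨x, hx, rfl⟩
  simpa using hΦ x hx

namespace IsEntanglementAnnihilating

variable {P : V₁ →ₗ[ℝ] V₂}

theorem mapsTo_map_comp (hP : IsEntanglementAnnihilating C₁ C₂ P) {m : ℕ} (hm : 1 ≤ m)
    {A : Fin m → V₀ →ₗ[ℝ] V₁} {B : Fin m → V₂ →ₗ[ℝ] V₃}
    (hA : ∀ l, ∀ φ ∈ dualConeSet C₁, φ ∘ₗ A l ∈ dualConeSet C₀) (hB : ∀ l, MapsTo (B l) C₂ C₃) :
    MapsTo (PiTensorProduct.map fun l => B l ∘ₗ P ∘ₗ A l)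
      (maxTensorPow C₀ m) (minTensorPow C₃ m) := by
  rw [PiTensorProduct.map_comp, PiTensorProduct.map_comp]
  exact (mapsTo_minTensorPow hB).comp ((hP m hm).comp (mapsTo_maxTensorPow hA))

theorem comp_comp (hP : IsEntanglementAnnihilating C₁ C₂ P) {A : V₀ →ₗ[ℝ] V₁} {B : V₂ →ₗ[ℝ] V₃}
    (hA : ∀ φ ∈ dualConeSet C₁, φ ∘ₗ A ∈ dualConeSet C₀) (hB : MapsTo B C₂ C₃) :
    IsEntanglementAnnihilating C₀ C₃ (B ∘ₗ P ∘ₗ A) := fun _ hm =>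
  hP.mapsTo_map_comp hm (fun _ => hA) fun _ => hB

theorem sum_smul_comp_comp (hP : IsEntanglementAnnihilating C₁ C₂ P) {ι : Type*} [Fintype ι]
    {w : ι → ℝ} (hw : ∀ i, 0 ≤ w i) (hw1 : ∑ i, w i = 1)
    {A : ι → V₀ →ₗ[ℝ] V₁} {B : ι → V₂ →ₗ[ℝ] V₃}
    (hA : ∀ i, ∀ φ ∈ dualConeSet C₁, φ ∘ₗ A i ∈ dualConeSet C₀) (hB : ∀ i, MapsTo (B i) C₂ C₃) :
    IsEntanglementAnnihilating C₀ C₃ (∑ i, w i • (B i ∘ₗ P ∘ₗ A i)) := by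
  classical
  intro m hm z hz
  -- The terms are indexed by words in `ι`, each letter choosing the operations on one factor.
  have hexpand : PiTensorProduct.map (fun _ : Fin m => ∑ i, w i • (B i ∘ₗ P ∘ₗ A i)) =
      ∑ p : Fin m → ι, (∏ l, w (p l)) •
        PiTensorProduct.map fun l => B (p l) ∘ₗ P ∘ₗ A (p l) := by
    have := (PiTensorProduct.mapMultilinear ℝ (fun _ : Fin m => V₀) fun _ => V₃).map_sum
      fun _ i => w i • (B i ∘ₗ P ∘ₗ A i)
    simpa only [MultilinearMap.map_smul_univ, PiTensorProduct.mapMultilinear_apply] using this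
  rw [hexpand, LinearMap.sum_apply]
  refine (convex_minTensorPow C₃ m).sum_mem (fun p _ => Finset.prod_nonneg fun l _ => hw (p l)) ?_
    fun p _ => hP.mapsTo_map_comp hm (fun l => hA (p l)) (fun l => hB (p l)) hz
  rw [← Fintype.sum_pow, hw1, one_pow]

end IsEntanglementAnnihilating

end TensorPowers

section Clifford

open Matrix

theorem exists_clifford_map (k : ℕ) :
    ∃ (ι : Type) (_ : Fintype ι) (_ : DecidableEq ι) (_ : Nonempty ι)
      (A : (Fin k → ℝ) →ₗ[ℝ] Matrix ι ι ℝ),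
      ∀ x, (A x)ᵀ = A x ∧ A x * A x = (x ⬝ᵥ x) • (1 : Matrix ι ι ℝ) := by
  induction k with
  | zero => exact ⟨Unit, inferInstance, inferInstance, inferInstance, 0, fun x => by simp⟩
  | succ k ih =>
    obtain ⟨ι, _, _, _, A, hA⟩ := ih
    let B : (Fin (k + 1) → ℝ) →ₗ[ℝ] Matrix (ι ⊕ ι) (ι ⊕ ι) ℝ :=
      { toFun := fun x => fromBlocks (x 0 • 1) (A (vecTail x)) (A (vecTail x)) (-x 0 • 1)
        map_add' := fun x y => by
          simp [fromBlocks_add, tail_add, add_smul, add_comm]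
        map_smul' := fun c x => by
          have htail : vecTail (c • x) = c • vecTail x := rfl
          simp [fromBlocks_smul, htail, smul_smul] }
    refine ⟨ι ⊕ ι, inferInstance, inferInstance, inferInstance, B, fun x => ⟨?_, ?_⟩⟩
    · simp [B, fromBlocks_transpose, (hA _).1]
    · have hdot : x ⬝ᵥ x = x 0 * x 0 + vecTail x ⬝ᵥ vecTail x := by
        simp [dotProduct, Fin.sum_univ_succ, vecTail]
      simp [B, fromBlocks_multiply, (hA _).2, hdot, ← fromBlocks_one, fromBlocks_smul,
        ← add_smul, smul_smul, add_comm]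

theorem transpose_mul_self_list_prod {ι : Type*} [Fintype ι] [DecidableEq ι] {m : ℕ}
    {M : Fin m → Matrix ι ι ℝ} {c : Fin m → ℝ} (h : ∀ l, (M l)ᵀ * M l = c l • 1) :
    (List.ofFn M).prodᵀ * (List.ofFn M).prod = (∏ l, c l) • 1 := by
  induction m with
  | zero => simp
  | succ m ih =>
    rw [List.ofFn_succ, List.prod_cons, Fin.prod_univ_succ, transpose_mul, Matrix.mul_assoc,
      ← Matrix.mul_assoc (M 0)ᵀ, h 0]
    simp [ih fun l => h l.succ, smul_smul]

/- The forms are the entries of one column of a product of Clifford matrices. Their number does not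
depend on `m`, which is what makes the limit `m → ∞` effective. -/
theorem exists_multilinearMap_sum_sq_eq_prod_norm_sq (k : ℕ) :
    ∃ (ι : Type) (_ : Fintype ι), ∀ m : ℕ,
      ∃ Ω : ι → MultilinearMap ℝ (fun _ : Fin m => EuclideanSpace ℝ (Fin k)) ℝ,
        ∀ x, ∑ z, Ω z x ^ 2 = ∏ l, ‖x l‖ ^ 2 := by
  obtain ⟨ι, _, _, ⟨y⟩, A, hA⟩ := exists_clifford_map k
  refine ⟨ι, inferInstance, fun m => ⟨fun z => (entryLinearMap ℝ ℝ z y).compMultilinearMap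
    ((MultilinearMap.mkPiAlgebraFin ℝ m (Matrix ι ι ℝ)).compLinearMap fun _ =>
      A ∘ₗ (WithLp.linearEquiv 2 ℝ (Fin k → ℝ)).toLinearMap), fun x => ?_⟩⟩
  have hprod := transpose_mul_self_list_prod (M := fun l => A (x l).ofLp)
    (c := fun l => ‖x l‖ ^ 2) fun l => by
      rw [(hA _).1, (hA _).2, EuclideanSpace.real_norm_sq_eq]
      simp only [dotProduct, sq]
  simpa [Matrix.mul_apply, sq] using congr_fun₂ hprod y y

end Clifford

theorem comp_mem_dualConeSet {V W : Type*} [AddCommGroup V] [Module ℝ V] [AddCommGroup W]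
    [Module ℝ W] {C : Set V} {D : Set W} {A : V →ₗ[ℝ] W} (hA : MapsTo A C D)
    {φ : Module.Dual ℝ W} (hφ : φ ∈ dualConeSet D) : φ ∘ₗ A ∈ dualConeSet C := fun _ hx =>
  hφ _ (hA hx)

/-- The ambient space of `lorentzCone k`: a time coordinate followed by `k` space coordinates. -/
abbrev LorentzSpace (k : ℕ) := ℝ × EuclideanSpace ℝ (Fin k)

namespace LorentzSpace

variable {k : ℕ}

/-- The unit vector `e₀` in the time direction, the centre of the Lorentz cone. -/
def timeVec (k : ℕ) : LorentzSpace k := (1, 0)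

/-- The `j`-th unit vector in the space directions. -/
def spaceVec (j : Fin k) : LorentzSpace k := (0, EuclideanSpace.single j 1)

theorem timeVec_mem_lorentzCone (k : ℕ) : timeVec k ∈ lorentzCone k := by
  simp [timeVec, lorentzCone]

theorem eq_fst_smul_timeVec_add_sum (x : LorentzSpace k) :
    x = x.1 • timeVec k + ∑ j, x.2 j • spaceVec j := by
  ext i
  · simp [timeVec, spaceVec, Prod.fst_sum]
  · simp [timeVec, spaceVec, Prod.snd_sum, Pi.single_apply]

theorem trace_eq (g : LorentzSpace k →ₗ[ℝ] LorentzSpace k) :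
    LinearMap.trace ℝ _ g = (g (timeVec k)).1 + ∑ j, (g (spaceVec j)).2 j := by
  have hg : g = (LinearMap.fst ℝ ℝ (EuclideanSpace ℝ (Fin k))).smulRight (g (timeVec k)) +
      ∑ j, (EuclideanSpace.projₗ j ∘ₗ LinearMap.snd ℝ ℝ _).smulRight (g (spaceVec j)) :=
    LinearMap.ext fun x => by
      conv_lhs => rw [eq_fst_smul_timeVec_add_sum x]
      simp
  conv_lhs => rw [hg]
  simp [LinearMap.trace_smulRight]

/-- The space part of the vector representing a functional on `LorentzSpace k` with respect to the
Euclidean inner product. -/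
def dualSpacePart (φ : Module.Dual ℝ (LorentzSpace k)) : EuclideanSpace ℝ (Fin k) :=
  ∑ j, φ (spaceVec j) • EuclideanSpace.single j 1

@[simp]
theorem dualSpacePart_apply (φ : Module.Dual ℝ (LorentzSpace k)) (j : Fin k) :
    dualSpacePart φ j = φ (spaceVec j) := by
  simp [dualSpacePart, Pi.single_apply]

theorem norm_dualSpacePart_le {φ : Module.Dual ℝ (LorentzSpace k)}
    (hφ : φ ∈ dualConeSet (lorentzCone k)) : ‖dualSpacePart φ‖ ≤ φ (timeVec k) := by
  set v := dualSpacePart φ with hv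
  have htime : 0 ≤ φ (timeVec k) := hφ _ (timeVec_mem_lorentzCone k)
  have hnull : φ (‖v‖, -v) = ‖v‖ * φ (timeVec k) - ‖v‖ ^ 2 := by
    rw [eq_fst_smul_timeVec_add_sum (‖v‖, -v), EuclideanSpace.real_norm_sq_eq]
    simp [hv, sq, sub_eq_add_neg]
  have := hφ (‖v‖, -v) (by simp [lorentzCone])
  rcases (norm_nonneg v).eq_or_lt with h0 | hpos
  · rwa [← h0]
  · nlinarith

section TestTensors

variable {m : ℕ}

/-- The tensor `e₀ ⊗ ⋯ ⊗ e₀ + ∑ I, ω (e_I) e_I`, the sum being over all words `I` of space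
directions. -/
def testTensor (ω : MultilinearMap ℝ (fun _ : Fin m => EuclideanSpace ℝ (Fin k)) ℝ) :
    ⨂[ℝ] _ : Fin m, LorentzSpace k :=
  PiTensorProduct.tprod ℝ (fun _ => timeVec k) +
    ∑ I : Fin m → Fin k, ω (fun l => EuclideanSpace.single (I l) 1) •
      PiTensorProduct.tprod ℝ fun l => spaceVec (I l)

/-- The form `x ↦ ∏ l, (x l).1 + ω (x₁.2, …, x_m.2)`, dual to `testTensor ω`. -/
def testForm (ω : MultilinearMap ℝ (fun _ : Fin m => EuclideanSpace ℝ (Fin k)) ℝ) :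
    MultilinearMap ℝ (fun _ : Fin m => LorentzSpace k) ℝ :=
  (MultilinearMap.mkPiAlgebra ℝ (Fin m) ℝ).compLinearMap (fun _ => LinearMap.fst ℝ _ _) +
    ω.compLinearMap fun _ => LinearMap.snd ℝ _ _

variable {ω : MultilinearMap ℝ (fun _ : Fin m => EuclideanSpace ℝ (Fin k)) ℝ}

theorem testForm_apply (x : Fin m → LorentzSpace k) :
    testForm ω x = ∏ l, (x l).1 + ω fun l => (x l).2 := by
  simp [testForm]

theorem dualPairing_testTensor (φ : Fin m → Module.Dual ℝ (LorentzSpace k)) :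
    dualPairing φ (testTensor ω) =
      ∏ l, φ l (timeVec k) + ω fun l => dualSpacePart (φ l) := by
  simp only [dualSpacePart, MultilinearMap.map_sum, MultilinearMap.map_smul_univ]
  simp [testTensor, dualPairing, mul_comm]

theorem testForm_nonneg (hω : ∀ x, |ω x| ≤ ∏ l, ‖x l‖) {x : Fin m → LorentzSpace k}
    (hx : ∀ l, x l ∈ lorentzCone k) : 0 ≤ testForm ω x := by
  have hbound : |ω fun l => (x l).2| ≤ ∏ l, (x l).1 :=
    (hω _).trans (Finset.prod_le_prod (fun _ _ => norm_nonneg _) fun l _ => hx l)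
  rw [testForm_apply]
  linarith [neg_abs_le (ω fun l => (x l).2)]

theorem testTensor_mem_maxTensorPow (hω : ∀ x, |ω x| ≤ ∏ l, ‖x l‖) :
    testTensor ω ∈ maxTensorPow (lorentzCone k) m := fun φ hφ => by
  have hbound : |ω fun l => dualSpacePart (φ l)| ≤ ∏ l, φ l (timeVec k) :=
    (hω _).trans (Finset.prod_le_prod (fun _ _ => norm_nonneg _) fun l _ =>
      norm_dualSpacePart_le (hφ l))
  rw [dualPairing_testTensor]
  linarith [neg_abs_le (ω fun l => dualSpacePart (φ l))]

theorem lift_testForm_map_testTensor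
    (η : MultilinearMap ℝ (fun _ : Fin m => EuclideanSpace ℝ (Fin k)) ℝ)
    (g : LorentzSpace k →ₗ[ℝ] LorentzSpace k) :
    PiTensorProduct.lift (testForm η) (PiTensorProduct.map (fun _ => g) (testTensor ω)) =
      (g (timeVec k)).1 ^ m + η (fun _ => (g (timeVec k)).2) +
        ∑ I : Fin m → Fin k, ω (fun l => EuclideanSpace.single (I l) 1) *
          (∏ l, (g (spaceVec (I l))).1 + η fun l => (g (spaceVec (I l))).2) := by
  simp [testTensor, testForm_apply]

theorem sum_mul_le_fst_timeVec_pow {g : LorentzSpace k →ₗ[ℝ] LorentzSpace k}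
    (hg : IsEntanglementAnnihilating (lorentzCone k) (lorentzCone k) g) (hm : 1 ≤ m)
    (hω : ∀ x, |ω x| ≤ ∏ l, ‖x l‖) :
    ∑ I : Fin m → Fin k, ω (fun l => EuclideanSpace.single (I l) 1) *
      ω (fun l => (g (spaceVec (I l))).2) ≤ (g (timeVec k)).1 ^ m := by
  have hneg : ∀ x, |(-ω) x| ≤ ∏ l, ‖x l‖ := by simpa using hω
  have htest {ω η : MultilinearMap ℝ (fun _ : Fin m => EuclideanSpace ℝ (Fin k)) ℝ}
      (hω : ∀ x, |ω x| ≤ ∏ l, ‖x l‖) (hη : ∀ x, |η x| ≤ ∏ l, ‖x l‖) :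
      0 ≤ PiTensorProduct.lift (testForm η)
        (PiTensorProduct.map (fun _ => g) (testTensor ω)) :=
    lift_nonneg_of_mem_minTensorPow (fun _ => testForm_nonneg hη)
      (hg m hm (testTensor_mem_maxTensorPow hω))
  have hpos := htest hω hneg
  have hnegpos := htest hneg hω
  simp only [lift_testForm_map_testTensor, neg_apply, mul_add, neg_mul, mul_neg,
    Finset.sum_add_distrib, Finset.sum_neg_distrib] at hpos hnegpos
  linarith

end TestTensors

theorem fst_apply_timeVec_nonneg {g : LorentzSpace k →ₗ[ℝ] LorentzSpace k}
    (hg : IsEntanglementAnnihilating (lorentzCone k) (lorentzCone k) g) :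
    0 ≤ (g (timeVec k)).1 := by
  simpa using sum_mul_le_fst_timeVec_pow hg le_rfl (ω := 0) fun x => by simp

section Twirl

/-- The symmetry of the Lorentz cone reversing the space directions with `ε j = -1`. -/
def signFlip (ε : Fin k → ℤˣ) : LorentzSpace k →ₗ[ℝ] LorentzSpace k :=
  LinearMap.prodMap LinearMap.id
    { toFun := fun x => WithLp.toLp 2 fun j => ((ε j : ℤ) : ℝ) * x j
      map_add' := fun x y => by ext; simp [mul_add]
      map_smul' := fun c x => by ext; simp [mul_left_comm] }

@[simp]
theorem signFlip_apply_fst (ε : Fin k → ℤˣ) (x : LorentzSpace k) : (signFlip ε x).1 = x.1 := rfl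

@[simp]
theorem signFlip_apply_snd (ε : Fin k → ℤˣ) (x : LorentzSpace k) (j : Fin k) :
    (signFlip ε x).2 j = ((ε j : ℤ) : ℝ) * x.2 j := rfl

theorem signFlip_timeVec (ε : Fin k → ℤˣ) : signFlip ε (timeVec k) = timeVec k := by
  ext <;> simp [timeVec]

theorem signFlip_spaceVec (ε : Fin k → ℤˣ) (j : Fin k) :
    signFlip ε (spaceVec j) = ((ε j : ℤ) : ℝ) • spaceVec j := by
  ext i
  · simp [spaceVec]
  · rcases eq_or_ne i j with rfl | hij <;> simp [spaceVec, *]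

theorem mapsTo_signFlip (ε : Fin k → ℤˣ) :
    MapsTo (signFlip ε) (lorentzCone k) (lorentzCone k) := fun x hx => by
  have hnorm : ‖(signFlip ε x).2‖ = ‖x.2‖ := by
    simp [EuclideanSpace.norm_eq, mul_pow, ← Int.cast_pow, ← Units.val_pow_eq_pow_val]
  simpa [lorentzCone, hnorm] using hx

theorem sum_signs_mul_signs (i j : Fin k) :
    ∑ ε : Fin k → ℤˣ, ((ε i : ℤ) : ℝ) * ((ε j : ℤ) : ℝ) = if i = j then 2 ^ k else 0 := by
  split_ifs with h
  · subst h
    simp [← Int.cast_mul, ← Units.val_mul]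
  · have hflip := Equiv.sum_comp (Equiv.mulLeft (Pi.mulSingle i (-1) : Fin k → ℤˣ))
      fun ε => ((ε i : ℤ) : ℝ) * ((ε j : ℤ) : ℝ)
    simp only [Equiv.coe_mulLeft, Pi.mul_apply, Pi.mulSingle_eq_same,
      Pi.mulSingle_eq_of_ne (Ne.symm h), one_mul, neg_mul, Units.val_neg, Int.cast_neg,
      Finset.sum_neg_distrib] at hflip
    linarith

theorem exists_isEntanglementAnnihilating_diagonal {g : LorentzSpace k →ₗ[ℝ] LorentzSpace k}
    (hg : IsEntanglementAnnihilating (lorentzCone k) (lorentzCone k) g) :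
    ∃ h, IsEntanglementAnnihilating (lorentzCone k) (lorentzCone k) h ∧
      (h (timeVec k)).1 = (g (timeVec k)).1 ∧
      ∀ j, (h (spaceVec j)).2 = (g (spaceVec j)).2 j • EuclideanSpace.single j 1 := by
  refine ⟨∑ ε : Fin k → ℤˣ, ((2 : ℝ) ^ k)⁻¹ • (signFlip ε ∘ₗ g ∘ₗ signFlip ε),
    hg.sum_smul_comp_comp (fun _ => by positivity) (by simp)
      (fun ε _ => comp_mem_dualConeSet (mapsTo_signFlip ε)) mapsTo_signFlip, ?_, fun j => ?_⟩
  · simp [signFlip_timeVec, Prod.fst_sum]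
  · ext i
    calc ((∑ ε : Fin k → ℤˣ, ((2 : ℝ) ^ k)⁻¹ • (signFlip ε ∘ₗ g ∘ₗ signFlip ε)) (spaceVec j)).2 i
      _ = ((2 : ℝ) ^ k)⁻¹ * (g (spaceVec j)).2 i *
          ∑ ε : Fin k → ℤˣ, ((ε i : ℤ) : ℝ) * ((ε j : ℤ) : ℝ) := by
        simp only [LinearMap.sum_apply, LinearMap.smul_apply, LinearMap.comp_apply, Prod.snd_sum,
          Prod.smul_snd, WithLp.ofLp_sum, WithLp.ofLp_smul, Finset.sum_apply, Pi.smul_apply,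
          signFlip_apply_snd, signFlip_spaceVec, map_smul, smul_eq_mul, Finset.mul_sum]
        exact Finset.sum_congr rfl fun ε _ => by ring
      _ = ((g (spaceVec j)).2 j • EuclideanSpace.single j (1 : ℝ)) i := by
        rw [sum_signs_mul_signs]
        rcases eq_or_ne i j with rfl | hij
        · simp; field_simp
        · simp [hij]

end Twirl

end LorentzSpace

open Filter in
theorem le_of_eventually_pow_le {r s c : ℝ} (hs : 0 ≤ s) (h : ∀ᶠ m in atTop, r ^ m ≤ c * s ^ m) :
    r ≤ s := by
  by_contra! hlt
  have hr : 0 < r := hs.trans_lt hlt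
  have hlim : Tendsto (fun m : ℕ => c * (s / r) ^ m) atTop (nhds (c * 0)) :=
    (tendsto_pow_atTop_nhds_zero_of_lt_one (by positivity) ((div_lt_one hr).2 hlt)).const_mul c
  have hone : (1 : ℝ) ≤ c * 0 := ge_of_tendsto hlim <| h.mono fun m hm => by
    rw [div_pow, ← mul_div_assoc]
    exact (one_le_div (by positivity)).2 hm
  norm_num at hone

namespace LorentzSpace

variable {k : ℕ}

theorem exists_forall_sum_pow_le {g : LorentzSpace k →ₗ[ℝ] LorentzSpace k}
    (hg : IsEntanglementAnnihilating (lorentzCone k) (lorentzCone k) g) :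
    ∃ n : ℝ, ∀ m, 1 ≤ m → (∑ j, (g (spaceVec j)).2 j) ^ m ≤ n * (g (timeVec k)).1 ^ m := by
  obtain ⟨h, hh, htime, hdiag⟩ := exists_isEntanglementAnnihilating_diagonal hg
  obtain ⟨ι, _, hforms⟩ := exists_multilinearMap_sum_sq_eq_prod_norm_sq k
  refine ⟨Fintype.card ι, fun m hm => ?_⟩
  obtain ⟨Ω, hΩ⟩ := hforms m
  set a : Fin k → ℝ := fun j => (g (spaceVec j)).2 j
  set e : (Fin m → Fin k) → Fin m → EuclideanSpace ℝ (Fin k) :=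
    fun I l => EuclideanSpace.single (I l) 1
  have hbound (z : ι) (x : Fin m → EuclideanSpace ℝ (Fin k)) : |Ω z x| ≤ ∏ l, ‖x l‖ := by
    refine abs_le_of_sq_le_sq ?_ (Finset.prod_nonneg fun l _ => norm_nonneg _)
    rw [← Finset.prod_pow, ← hΩ]
    exact Finset.single_le_sum (fun z _ => sq_nonneg (Ω z x)) (Finset.mem_univ z)
  calc (∑ j, a j) ^ m
    _ = ∑ I : Fin m → Fin k, (∏ l, a (I l)) * ∑ z, Ω z (e I) ^ 2 := by
      simp [Fintype.sum_pow, hΩ, e]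
    _ = ∑ z, ∑ I : Fin m → Fin k, Ω z (e I) * Ω z fun l => a (I l) • e I l := by
      simp_rw [MultilinearMap.map_smul_univ, Finset.mul_sum]
      rw [Finset.sum_comm]
      refine Finset.sum_congr rfl fun z _ => Finset.sum_congr rfl fun I _ => ?_
      rw [smul_eq_mul]
      ring
    _ = ∑ z, ∑ I : Fin m → Fin k, Ω z (e I) * Ω z fun l => (h (spaceVec (I l))).2 := by
      simp_rw [hdiag, a, e]
    _ ≤ ∑ _z : ι, (h (timeVec k)).1 ^ m :=
      Finset.sum_le_sum fun z _ => sum_mul_le_fst_timeVec_pow hh hm (hbound z)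
    _ = Fintype.card ι * (g (timeVec k)).1 ^ m := by
      simp [htime]

theorem trace_nonneg_of_isEntanglementAnnihilating {g : LorentzSpace k →ₗ[ℝ] LorentzSpace k}
    (hg : IsEntanglementAnnihilating (lorentzCone k) (lorentzCone k) g) :
    0 ≤ LinearMap.trace ℝ _ g := by
  obtain ⟨n, hn⟩ := exists_forall_sum_pow_le hg
  have hsq : (∑ j, (g (spaceVec j)).2 j) ^ 2 ≤ (g (timeVec k)).1 ^ 2 := by
    refine le_of_eventually_pow_le (c := n) (by positivity) ?_
    filter_upwards [Filter.eventually_ge_atTop 1] with m hm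
    simpa only [← pow_mul] using hn (2 * m) (by lia)
  rw [trace_eq]
  linarith [(abs_le_of_sq_le_sq' hsq (fst_apply_timeVec_nonneg hg)).1]

end LorentzSpace

namespace IsEntanglementBreaking

variable {V₁ V₂ V₃ : Type*} [AddCommGroup V₁] [Module ℝ V₁] [AddCommGroup V₂] [Module ℝ V₂]
  [AddCommGroup V₃] [Module ℝ V₃] {C₁ : Set V₁} {C₂ : Set V₂} {C₃ : Set V₃}

theorem of_fintype {ι : Type*} [Fintype ι] {φ : ι → Module.Dual ℝ V₁} {x : ι → V₂}
    {f : V₁ →ₗ[ℝ] V₂} (hφ : ∀ i, φ i ∈ dualConeSet C₁) (hx : ∀ i, x i ∈ C₂)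
    (hf : ∀ v, f v = ∑ i, φ i v • x i) : IsEntanglementBreaking C₁ C₂ f := by
  let e := (Fintype.equivFin ι).symm
  refine ⟨Fintype.card ι, φ ∘ e, x ∘ e, fun i => hφ _, fun i => hx _, fun v => ?_⟩
  rw [hf]
  exact (e.sum_comp fun i => φ i v • x i).symm

theorem sum {ι : Type*} [Fintype ι] {f : ι → V₁ →ₗ[ℝ] V₂}
    (hf : ∀ i, IsEntanglementBreaking C₁ C₂ (f i)) : IsEntanglementBreaking C₁ C₂ (∑ i, f i) := by
  choose m φ x hφ hx hfx using hf
  refine of_fintype (fun p : Σ i, Fin (m i) => hφ p.1 p.2) (fun p => hx p.1 p.2) fun v => ?_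
  simp only [LinearMap.sum_apply, hfx, Fintype.sum_sigma]

theorem comp_left {f : V₁ →ₗ[ℝ] V₂} (hf : IsEntanglementBreaking C₁ C₂ f) {g : V₂ →ₗ[ℝ] V₃}
    (hg : MapsTo g C₂ C₃) : IsEntanglementBreaking C₁ C₃ (g ∘ₗ f) := by
  obtain ⟨m, φ, x, hφ, hx, hfx⟩ := hf
  exact ⟨m, φ, fun i => g (x i), hφ, fun i => hg (hx i), fun v => by simp [hfx]⟩

end IsEntanglementBreaking

section Duality

variable {ι V W : Type*} [Fintype ι] [AddCommGroup V] [Module ℝ V] {C : Set V} {K : Set W}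

/-- The coordinates, in the basis dual to `b`, of the functionals in `dualConeSet C` whose values on
`b` sum to `1`. If `b` consists of elements of `C`, this is a base of the dual cone. -/
def dualConeBase (C : Set V) (b : Module.Basis ι ℝ V) : Set (ι → ℝ) :=
  stdSimplex ℝ ι ∩ {p | b.constr ℝ p ∈ dualConeSet C}

theorem isCompact_dualConeBase (C : Set V) (b : Module.Basis ι ℝ V) :
    IsCompact (dualConeBase C b) := by
  refine (isCompact_stdSimplex ℝ ι).inter_right ?_
  have hinter : {p | b.constr ℝ p ∈ dualConeSet C} =
      ⋂ x ∈ C, {p : ι → ℝ | 0 ≤ ∑ i, b.repr x i * p i} := by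
    ext p
    simp [dualConeSet, Module.Basis.constr_apply_fintype]
  rw [hinter]
  exact isClosed_biInter fun x _ => isClosed_le continuous_const (by fun_prop)

theorem smul_mem_dualConeSet {c : ℝ} (hc : 0 ≤ c) {φ : Module.Dual ℝ V} (hφ : φ ∈ dualConeSet C) :
    c • φ ∈ dualConeSet C := fun x hx => mul_nonneg hc (hφ x hx)

theorem exists_smul_mem_dualConeBase {b : Module.Basis ι ℝ V} (hb : ∀ i, b i ∈ C)
    {φ : Module.Dual ℝ V} (hφ : φ ∈ dualConeSet C) (hφ0 : φ ≠ 0) :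
    ∃ c : ℝ, 0 ≤ c ∧ ∃ p ∈ dualConeBase C b, (fun i => φ (b i)) = c • p := by
  have hnonneg (i : ι) : 0 ≤ φ (b i) := hφ _ (hb i)
  have hpos : 0 < ∑ i, φ (b i) := by
    refine (Finset.sum_nonneg fun i _ => hnonneg i).lt_of_ne' fun h0 => hφ0 (b.ext fun i => ?_)
    exact (Finset.sum_eq_zero_iff_of_nonneg fun i _ => hnonneg i).1 h0 i (Finset.mem_univ i)
  refine ⟨_, hpos.le, (∑ i, φ (b i))⁻¹ • fun i => φ (b i), ⟨⟨fun i => ?_, ?_⟩, ?_⟩, ?_⟩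
  · exact mul_nonneg (inv_nonneg.2 hpos.le) (hnonneg i)
  · simp [← Finset.mul_sum, hpos.ne']
  · simpa [b.constr_self] using smul_mem_dualConeSet (inv_nonneg.2 hpos.le) hφ
  · rw [smul_inv_smul₀ hpos.ne']

theorem isEntanglementBreaking_of_mem_hull [AddCommGroup W] [Module ℝ W]
    (b : Module.Basis ι ℝ V) {f : V →ₗ[ℝ] W}
    (hf : (fun i => f (b i)) ∈ PointedCone.hull ℝ
      ((fun p : (ι → ℝ) × W => fun i => p.1 i • p.2) '' dualConeBase C b ×ˢ K)) :
    IsEntanglementBreaking C K f := by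
  obtain ⟨n, c, g, hg⟩ := Submodule.mem_span_set'.1 hf
  choose p hp hpg using fun j => (g j).2
  refine ⟨n, fun j => (c j : ℝ) • b.constr ℝ (p j).1, fun j => (p j).2,
    fun j => smul_mem_dualConeSet (c j).2 (hp j).1.2, fun j => (hp j).2, fun v => ?_⟩
  suffices f = ∑ j, ((c j : ℝ) • b.constr ℝ (p j).1).smulRight (p j).2 by
    conv_lhs => rw [this]
    simp
  refine b.ext fun i => ?_
  rw [← congr_fun hg i]
  simp only [Finset.sum_apply, Pi.smul_apply, ← hpg, LinearMap.sum_apply, LinearMap.smulRight_apply,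
    LinearMap.smul_apply, b.constr_basis, smul_assoc]
  simp

/- Identify maps `V → W` with `ι → W` through `b`, and functionals on `ι → W` with maps `W → V`: the
pairing becomes `f, T ↦ tr (f ∘ T)`. -/
theorem isEntanglementBreaking_of_forall_trace_comp_nonneg [FiniteDimensional ℝ V]
    [NormedAddCommGroup W] [NormedSpace ℝ W] [FiniteDimensional ℝ W]
    (hC : Submodule.span ℝ C = ⊤) (hK : IsCompact K) (ℓ : W →L[ℝ] ℝ) (hℓ : ∀ x ∈ K, ℓ x = 1)
    {f : V →ₗ[ℝ] W}
    (hf : ∀ T : W →ₗ[ℝ] V, (∀ φ ∈ dualConeSet C, ∀ x ∈ K, 0 ≤ φ (T x)) →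
      0 ≤ LinearMap.trace ℝ W (f ∘ₗ T)) :
    IsEntanglementBreaking C K f := by
  classical
  let b := Module.Basis.ofSpan hC.ge
  have : Fintype _ := FiniteDimensional.fintypeBasisIndex b
  have hb (i) : b i ∈ C := Module.Basis.ofSpan_subset hC.ge (mem_range_self i)
  refine isEntanglementBreaking_of_mem_hull b (mem_hull_of_forall_dual_nonneg
    (((isCompact_dualConeBase C b).prod hK).image (by fun_prop))
    (∑ i, ℓ ∘L ContinuousLinearMap.proj i) ?_ fun g hg => ?_)
  · rintro _ ⟨⟨p, x⟩, ⟨hp, hx⟩, rfl⟩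
    simpa [hℓ x hx] using hp.1.2
  have hg_sum (z) : g z = ∑ i, g (Pi.single i (z i)) := by
    rw [← map_sum, Finset.univ_sum_single]
  let T : W →ₗ[ℝ] V := ∑ i, (g.toLinearMap ∘ₗ LinearMap.single ℝ _ i).smulRight (b i)
  have hT (φ : Module.Dual ℝ V) (x : W) : φ (T x) = g fun i => φ (b i) • x := by
    rw [hg_sum]
    simp [T, Pi.single_smul, mul_comm]
  have htrace : LinearMap.trace ℝ W (f ∘ₗ T) = g fun i => f (b i) := by
    have hcomp : f ∘ₗ T = ∑ i, (g.toLinearMap ∘ₗ LinearMap.single ℝ _ i).smulRight (f (b i)) := by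
      ext x
      simp [T]
    rw [hg_sum, hcomp]
    simp [LinearMap.trace_smulRight]
  rw [← htrace]
  refine hf T fun φ hφ x hx => ?_
  rcases eq_or_ne φ 0 with rfl | hφ0
  · simp
  obtain ⟨c, hc, p, hp, hcp⟩ := exists_smul_mem_dualConeBase hb hφ hφ0
  have hsmul : (fun i => φ (b i) • x) = c • fun i => p i • x := by
    ext1 i
    simp [congr_fun hcp i, mul_smul]
  rw [hT, hsmul, map_smul]
  exact mul_nonneg hc (hg _ ⟨(p, x), ⟨hp, hx⟩, rfl⟩)

end Duality

namespace LorentzSpace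

variable {k : ℕ}

/-- The unit ball at time `1`, a base of the Lorentz cone. -/
def lorentzBase (k : ℕ) : Set (LorentzSpace k) := {1} ×ˢ Metric.closedBall 0 1

theorem isCompact_lorentzBase (k : ℕ) : IsCompact (lorentzBase k) :=
  isCompact_singleton.prod (isCompact_closedBall 0 1)

theorem lorentzBase_subset_lorentzCone (k : ℕ) : lorentzBase k ⊆ lorentzCone k := by
  rintro ⟨t, x⟩ ⟨rfl, hx⟩
  simpa [lorentzCone] using hx

theorem exists_eq_smul_lorentzBase {x : LorentzSpace k} (hx : x ∈ lorentzCone k) :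
    ∃ c : ℝ, 0 ≤ c ∧ ∃ y ∈ lorentzBase k, x = c • y := by
  obtain ⟨t, x⟩ := x
  change ‖x‖ ≤ t at hx
  refine ⟨t, (norm_nonneg x).trans hx, (1, t⁻¹ • x), ⟨rfl, ?_⟩, ?_⟩
  · rw [mem_closedBall_zero_iff, norm_smul, norm_inv, inv_mul_eq_div]
    exact div_le_one_of_le₀ (hx.trans (Real.le_norm_self t)) (norm_nonneg t)
  · rcases eq_or_ne t 0 with rfl | ht
    · simp [norm_le_zero_iff.1 hx]
    · simp [ht]

end LorentzSpace

section ReductionCriterion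

variable {V₁ V₂ V₃ : Type*} [AddCommGroup V₁] [Module ℝ V₁] [FiniteDimensional ℝ V₁]
  [AddCommGroup V₂] [Module ℝ V₂] [AddCommGroup V₃] [Module ℝ V₃]
  {C₁ : Set V₁} {C₂ : Set V₂} {C₃ : Set V₃} {P : V₁ →ₗ[ℝ] V₂}

open LorentzSpace in
theorem IsEntanglementAnnihilating.isEntanglementBreaking_comp {k : ℕ}
    (hP : IsEntanglementAnnihilating C₁ C₂ P) (hC₁ : Submodule.span ℝ C₁ = ⊤)
    {R : V₂ →ₗ[ℝ] LorentzSpace k} (hR : MapsTo R C₂ (lorentzCone k)) :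
    IsEntanglementBreaking C₁ (lorentzCone k) (R ∘ₗ P) := by
  suffices IsEntanglementBreaking C₁ (lorentzBase k) (R ∘ₗ P) from
    this.comp_left (g := LinearMap.id) (lorentzBase_subset_lorentzCone k)
  refine isEntanglementBreaking_of_forall_trace_comp_nonneg hC₁ (isCompact_lorentzBase k)
    (ContinuousLinearMap.fst ℝ ℝ _) (fun x hx => hx.1) fun T hT => ?_
  refine trace_nonneg_of_isEntanglementAnnihilating (hP.comp_comp (fun φ hφ x hx => ?_) hR)
  obtain ⟨c, hc, y, hy, rfl⟩ := exists_eq_smul_lorentzBase hx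
  simpa using mul_nonneg hc (hT φ hφ y hy)

theorem generalized_reduction_criterion_general (hC₁ : Submodule.span ℝ C₁ = ⊤)
    (hP : IsEntanglementAnnihilating C₁ C₂ P) {ι : Type*} [Fintype ι] {k : ι → ℕ}
    {R : ∀ i, V₂ →ₗ[ℝ] ℝ × EuclideanSpace ℝ (Fin (k i))}
    {S : ∀ i, ℝ × EuclideanSpace ℝ (Fin (k i)) →ₗ[ℝ] V₃}
    (hR : ∀ i, MapsTo (R i) C₂ (lorentzCone (k i)))
    (hS : ∀ i, MapsTo (S i) (lorentzCone (k i)) C₃) :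
    IsEntanglementBreaking C₁ C₃ ((∑ i, S i ∘ₗ R i) ∘ₗ P) := by
  have hsum : (∑ i, S i ∘ₗ R i) ∘ₗ P = ∑ i, S i ∘ₗ R i ∘ₗ P := by
    ext
    simp
  rw [hsum]
  exact .sum fun i => (hP.isEntanglementBreaking_comp hC₁ (hR i)).comp_left (hS i)

end ReductionCriterion

instance (d : ℕ) : FiniteDimensional ℝ (HermMat d) :=
  inferInstanceAs (FiniteDimensional ℝ (selfAdjoint.submodule ℝ (Matrix (Fin d) (Fin d) ℂ)))

open scoped Matrix.Norms.L2Operator MatrixOrder in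
theorem span_psdCone (d : ℕ) : Submodule.span ℝ (psdCone d) = ⊤ := by
  refine Submodule.eq_top_iff'.2 fun X => ?_
  have hone : (1 : HermMat d) ∈ psdCone d := Matrix.PosSemidef.one
  have hdiff : ‖(X : Matrix (Fin d) (Fin d) ℂ)‖ • (1 : HermMat d) - X ∈ psdCone d := by
    have := IsSelfAdjoint.le_algebraMap_norm_self (a := (X : Matrix (Fin d) (Fin d) ℂ)) X.2
    rw [Matrix.le_iff, Algebra.algebraMap_eq_smul_one] at this
    simpa [psdCone] using this
  rw [← sub_sub_cancel (‖(X : Matrix (Fin d) (Fin d) ℂ)‖ • (1 : HermMat d)) X]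
  exact sub_mem (Submodule.smul_mem _ _ (Submodule.subset_span hone))
    (Submodule.subset_span hdiff)

/-- **Theorem (generalized reduction criterion).** If `P` is entanglement annihilating and
`Q` factors through a Lorentz cone `L_k`, then `Q ∘ P` is entanglement breaking. -/
theorem generalized_reduction_criterion
    (k dA dB : ℕ) (hk : 1 ≤ k)
    (P : HermMat dA →ₗ[ℝ] HermMat dB)
    (hP : IsEntanglementAnnihilating (psdCone dA) (psdCone dB) P)
    (m : ℕ)
    (R : Fin m → (HermMat dB →ₗ[ℝ] (ℝ × EuclideanSpace ℝ (Fin k))))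
    (S : Fin m → ((ℝ × EuclideanSpace ℝ (Fin k)) →ₗ[ℝ] HermMat dA))
    (hR : ∀ i, Set.MapsTo (⇑(R i)) (psdCone dB) (lorentzCone k))
    (hS : ∀ i, Set.MapsTo (⇑(S i)) (lorentzCone k) (psdCone dA))
    (Q : HermMat dB →ₗ[ℝ] HermMat dA) (hQ : Q = ∑ i, S i ∘ₗ R i) :
    IsEntanglementBreaking (psdCone dA) (psdCone dA) (Q ∘ₗ P) := by
  subst hQ
  exact generalized_reduction_criterion_general (span_psdCone dA) hP hR hS

end
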